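/- Let S be a positive face structure and a, b ∈ S_n with a <⁺ b. Then γ(a) ≤⁺ γ(b). -/

import Mathlib

/-- A pre-hypergraph: dimension-indexed finite sets of faces together with
codomain functions `gam k : S_{k+1} → S_k` and domain assignments
`del k : S_{k+1} → Finset S_k`. -/
structure PreHG where
  faces : ℕ → Finset ℕ
  gam : ℕ → ℕ → ℕ
  del : ℕ → ℕ → Finset ℕ

namespace PreHG

/-- δ extended to sets of faces. -/
def delS (S : PreHG) (k : ℕ) (A : Finset ℕ) : Finset ℕ := A.biUnion (S.del k)

/-- γ extended to sets of faces. -/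
def gamS (S : PreHG) (k : ℕ) (A : Finset ℕ) : Finset ℕ := A.image (S.gam k)

/-- The set `ι(a) = δδ(a) ∩ γδ(a)` of internal faces of a face `a` of dimension `k+2`
(the result lives in dimension `k`). -/
def iota (S : PreHG) (k : ℕ) (a : ℕ) : Finset ℕ :=
  S.delS k (S.del (k+1) a) ∩ S.gamS k (S.del (k+1) a)

/-- One step of the upper order: `a ⊲⁺ b` on faces of dimension `k`:
there is `α` of dimension `k+1` with `a ∈ δ(α)` and `γ(α) = b`. -/
def ltPlusOne (S : PreHG) (k : ℕ) (a b : ℕ) : Prop :=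
  ∃ α ∈ S.faces (k+1), a ∈ S.del k α ∧ S.gam k α = b

/-- The upper order `<⁺` on faces of dimension `k` (transitive closure of `⊲⁺`). -/
def ltPlus (S : PreHG) (k : ℕ) : ℕ → ℕ → Prop :=
  Relation.TransGen (S.ltPlusOne k)

/-- One step of the lower order: `a ⊲⁻ b` iff `γ(a) ∈ δ(b)`, on faces of dimension `k`
(the empty relation in dimension 0). -/
def ltMinusOne (S : PreHG) : ℕ → ℕ → ℕ → Prop
  | 0, _, _ => False
  | (k+1), a, b => a ∈ S.faces (k+1) ∧ b ∈ S.faces (k+1) ∧ S.gam k a ∈ S.del k b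

/-- The lower order `<⁻` on faces of dimension `k` (transitive closure of `⊲⁻`). -/
def ltMinus (S : PreHG) (k : ℕ) : ℕ → ℕ → Prop :=
  Relation.TransGen (S.ltMinusOne k)

/-- Comparability in the upper order. -/
def perpPlus (S : PreHG) (k : ℕ) (a b : ℕ) : Prop := S.ltPlus k a b ∨ S.ltPlus k b a

/-- Comparability in the lower order. -/
def perpMinus (S : PreHG) (k : ℕ) (a b : ℕ) : Prop := S.ltMinus k a b ∨ S.ltMinus k b a

/-- Iterated codomain `γ^{(l)}`: maps a face of dimension `l+m` down to dimension `l`. -/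
def gDown (S : PreHG) (l : ℕ) : ℕ → ℕ → ℕ
  | 0, a => a
  | (m+1), a => gDown S l m (S.gam (l+m) a)

/-- The axioms of a positive hypergraph. -/
def IsHG (S : PreHG) : Prop :=
  (∀ k a, a ∈ S.faces (k+1) → S.gam k a ∈ S.faces k) ∧
  (∀ k a, a ∈ S.faces (k+1) → S.del k a ⊆ S.faces k) ∧
  (∀ k a, a ∈ S.faces (k+1) → (S.del k a).Nonempty) ∧
  (∀ a ∈ S.faces 1, (S.del 0 a).card = 1) ∧
  (∃ N, ∀ k, N ≤ k → S.faces k = ∅)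

/-- Globularity: for faces of dimension ≥ 2,
`{γγ(a)} = γδ(a) − δδ(a)` and `δγ(a) = δδ(a) − γδ(a)`. -/
def Globular (S : PreHG) : Prop :=
  ∀ k a, a ∈ S.faces (k+2) →
    ({S.gam k (S.gam (k+1) a)} : Finset ℕ)
        = S.gamS k (S.del (k+1) a) \ S.delS k (S.del (k+1) a) ∧
      S.del k (S.gam (k+1) a)
        = S.delS k (S.del (k+1) a) \ S.gamS k (S.del (k+1) a)

/-- Strictness: `<⁺` is irreflexive in every dimension. -/
def StrictPlus (S : PreHG) : Prop := ∀ k, ∀ a ∈ S.faces k, ¬ S.ltPlus k a a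

/-- `<⁺` is linear in dimension 0. -/
def LinearZero (S : PreHG) : Prop :=
  ∀ a ∈ S.faces 0, ∀ b ∈ S.faces 0, a = b ∨ S.ltPlus 0 a b ∨ S.ltPlus 0 b a

/-- Disjointness: no two faces of positive dimension are comparable in both orders. -/
def Disjointness (S : PreHG) : Prop :=
  ∀ k a b, a ∈ S.faces (k+1) → b ∈ S.faces (k+1) →
    ¬ (S.perpPlus (k+1) a b ∧ S.perpMinus (k+1) a b)

/-- Pencil linearity: γ-fibers and δ-fibers are linearly ordered by `<⁺`. -/
def Pencil (S : PreHG) : Prop :=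
  ∀ k x,
    (∀ a b, a ∈ S.faces (k+1) → b ∈ S.faces (k+1) →
      S.gam k a = x → S.gam k b = x → a = b ∨ S.perpPlus (k+1) a b) ∧
    (∀ a b, a ∈ S.faces (k+1) → b ∈ S.faces (k+1) →
      x ∈ S.del k a → x ∈ S.del k b → a = b ∨ S.perpPlus (k+1) a b)

/-- A positive face structure: a nonempty positive hypergraph satisfying
globularity, strictness, disjointness and pencil linearity. -/
def IsPFS (S : PreHG) : Prop :=
  S.IsHG ∧ (S.faces 0).Nonempty ∧ S.Globular ∧ S.StrictPlus ∧ S.LinearZero ∧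
    S.Disjointness ∧ S.Pencil

end PreHG

open Classical in
/-- Well-founded induction along `<⁺`: a property of faces of dimension `k` that holds at `x`
as soon as it holds at every face above `x` holds everywhere. -/
theorem PreHG.StrictPlus.induction {S : PreHG} (hS : S.StrictPlus) {k : ℕ} {P : ℕ → Prop}
    (step : ∀ x ∈ S.faces k, (∀ y ∈ S.faces k, S.ltPlus k x y → P y) → P x) :
    ∀ x ∈ S.faces k, P x := by
  intro x hx
  induction hn : ((S.faces k).filter (S.ltPlus k x)).card using Nat.strong_induction_on
    generalizing x with
  | _ n ih =>
    subst hn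
    refine step x hx fun y hy hxy => ih _ (Finset.card_lt_card ?_) y hy rfl
    refine (Finset.ssubset_iff_of_subset fun z hz => ?_).2 ⟨y, ?_, ?_⟩
    · rw [Finset.mem_filter] at hz ⊢
      exact ⟨hz.1, hxy.trans hz.2⟩
    · exact Finset.mem_filter.2 ⟨hy, hxy⟩
    · exact fun h => hS k y hy (Finset.mem_filter.1 h).2

/-- Every face in `γδ(α)` is `≤⁺ γγ(α)`. -/
theorem PreHG.eq_or_ltPlus_of_mem_gamS {S : PreHG} (hHG : S.IsHG) (hG : S.Globular)
    (hS : S.StrictPlus) {k α : ℕ} (hα : α ∈ S.faces (k + 2)) {x : ℕ}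
    (hx : x ∈ S.gamS k (S.del (k + 1) α)) :
    x = S.gam k (S.gam (k + 1) α) ∨ S.ltPlus k x (S.gam k (S.gam (k + 1) α)) := by
  obtain ⟨hgam, hdel, -⟩ := hHG
  have mem_faces : ∀ y ∈ S.gamS k (S.del (k + 1) α), y ∈ S.faces k := by
    intro y hy
    obtain ⟨c, hc, rfl⟩ := Finset.mem_image.1 hy
    exact hgam k c (hdel (k + 1) α hα hc)
  refine hS.induction (P := fun x => x ∈ S.gamS k (S.del (k + 1) α) →
    x = S.gam k (S.gam (k + 1) α) ∨ S.ltPlus k x (S.gam k (S.gam (k + 1) α)))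
    (fun x _ ih hx => ?_) x (mem_faces x hx) hx
  by_cases hd : x ∈ S.delS k (S.del (k + 1) α)
  · obtain ⟨c, hc, hxc⟩ := Finset.mem_biUnion.1 hd
    have hc' : S.gam k c ∈ S.gamS k (S.del (k + 1) α) := Finset.mem_image_of_mem _ hc
    have hlt : S.ltPlus k x (S.gam k c) := .single ⟨c, hdel (k + 1) α hα hc, hxc, rfl⟩
    rcases ih _ (mem_faces _ hc') hlt hc' with h | h
    · exact .inr (h ▸ hlt)
    · exact .inr (hlt.trans h)
  · left
    rw [← Finset.mem_singleton, (hG k α hα).1]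
    exact Finset.mem_sdiff.2 ⟨hx, hd⟩

/-- If `a <⁺ b` in `S_n` then `γ(a) ≤⁺ γ(b)`. -/
theorem stmt6 (S : PreHG) (hS : S.IsPFS) (k a b : ℕ)
    (ha : a ∈ S.faces (k+1)) (hb : b ∈ S.faces (k+1))
    (hab : S.ltPlus (k+1) a b) :
    S.gam k a = S.gam k b ∨ S.ltPlus k (S.gam k a) (S.gam k b) := by
  obtain ⟨hHG, -, hG, hStrict, -⟩ := hS
  have one_step : ∀ {c d}, S.ltPlusOne (k + 1) c d →
      S.gam k c = S.gam k d ∨ S.ltPlus k (S.gam k c) (S.gam k d) := by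
    rintro c _ ⟨α, hα, hc, rfl⟩
    exact PreHG.eq_or_ltPlus_of_mem_gamS hHG hG hStrict hα (Finset.mem_image_of_mem _ hc)
  clear hb
  induction hab with
  | single h => exact one_step h
  | tail _ h ih =>
    rcases ih, one_step h with ⟨h₁ | h₁, h₂ | h₂⟩
    · exact .inl (h₁.trans h₂)
    · exact .inr (h₁ ▸ h₂)
    · exact .inr (h₂ ▸ h₁)
    · exact .inr (h₁.trans h₂)
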